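/- Let q > 3 be an odd prime power and m = a(q-1) + 2 with a ≥ 1, and n = (q^m-1)/(q-1). Let A = (q-1)/2. Then the largest q-cyclotomic coset leader modulo n is δ = (q^m - 1 - q^{m-1} - Σ_{ℓ=1}^{A} q^{aℓ} - Σ_{ℓ=A+1}^{q-2} q^{aℓ+1})/(q-1), and its q-cyclotomic coset has size m/2. -/

import Mathlib

/-!
Write `q = k + 1`, so that `k` is the largest base-`q` digit, and `n = (q ^ m - 1) / k`. For `s < n`
the base-`q` expansion of `s / n` has period `m`, and multiplication of `s` by `q` modulo `n`
shifts it. The digits add up to `k * c` over a period, for some `c < m`, and summation by parts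
gives `s = c + ∑ r < m, q ^ (m - 1 - r) * (sum of the first r digits)`, so that orbit elements are
compared through the partial sums of their digits. By the cycle lemma some shift has all its partial
sums at most `⌊r * k * c / m⌋`, hence no coset leader exceeds the number with exactly these partial
sums for `c = m - 1`. That number is itself a leader because `⌊x + y⌋ ≥ ⌊x⌋ + ⌊y⌋`, and its shift
by `l` is the number itself exactly when `m ∣ l * k`.
-/

open Finset Function

section FloorDivision

variable {m : ℕ}

lemma div_le_add_mul_div_sub (j r t m : ℕ) : r * t / m ≤ (j + r) * t / m - j * t / m := by
  rw [add_mul]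
  exact Nat.le_sub_of_add_le' Nat.div_add_div_le_add_div

lemma dvd_left_of_div_add_div_eq {a b : ℕ} (hdvd : m ∣ a + b)
    (heq : a / m + b / m = (a + b) / m) : m ∣ a := by
  have ha := Nat.div_add_mod a m
  have hb := Nat.div_add_mod b m
  have hab := Nat.mul_div_cancel' hdvd
  rw [← heq, mul_add] at hab
  exact Nat.dvd_of_mod_eq_zero (by omega)

lemma exists_lt_dvd_add (hm : 0 < m) (l : ℕ) : ∃ r < m, m ∣ l + r := by
  refine ⟨(m - l % m) % m, Nat.mod_lt _ hm, Nat.dvd_of_mod_eq_zero ?_⟩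
  have hl : l + (m - l % m) = m * (l / m + 1) := by
    have := Nat.div_add_mod l m
    have := Nat.mod_lt l hm
    rw [mul_add]
    omega
  rw [Nat.add_mod_mod, hl, Nat.mul_mod_right]

lemma mul_lt_iff_add_mul_sub_one_div_lt (hm : 0 < m) (ℓ t : ℕ) :
    ℓ * m < t ↔ ℓ + t * (m - 1) / m < t := by
  obtain ⟨c, rfl⟩ := Nat.exists_eq_add_one_of_ne_zero hm.ne'
  rcases le_or_gt ℓ t with hle | hlt
  · obtain ⟨u, rfl⟩ := Nat.exists_eq_add_of_le hle
    rw [add_lt_add_iff_left, Nat.div_lt_iff_lt_mul hm, Nat.add_sub_cancel, add_mul, mul_add_one,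
      mul_add_one]
    omega
  · have hle : t ≤ ℓ * (c + 1) := hlt.le.trans (Nat.le_mul_of_pos_right ℓ hm)
    exact iff_of_false hle.not_gt (hlt.le.trans (Nat.le_add_right _ _)).not_gt

end FloorDivision

/-- The number whose `m` base-`q` digits, most significant first, are `x 0, …, x (m - 1)`. The
digits may be arbitrary natural numbers. -/
def wordValue (q m : ℕ) (x : ℕ → ℕ) : ℕ := ∑ i ∈ range m, q ^ (m - 1 - i) * x i

/-- The number `(q ^ m - 1) / (q - 1)`, with base-`q` digits `11…1`; the modulus of the cosets. -/
def repunit (q m : ℕ) : ℕ := ∑ i ∈ range m, q ^ i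

section Words

variable {k m q : ℕ} {x : ℕ → ℕ}

lemma wordValue_succ (q m : ℕ) (x : ℕ → ℕ) :
    wordValue q (m + 1) x = q * wordValue q m x + x m := by
  simp only [wordValue, sum_range_succ, mul_sum, Nat.add_sub_cancel, Nat.sub_self, pow_zero,
    one_mul]
  congr 1
  refine sum_congr rfl fun i hi => ?_
  rw [← mul_assoc, ← pow_succ']
  have := mem_range.1 hi
  congr 2
  omega

lemma wordValue_succ' (q m : ℕ) (x : ℕ → ℕ) :
    wordValue q (m + 1) x = q ^ m * x 0 + wordValue q m fun i => x (i + 1) := by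
  simp only [wordValue, sum_range_succ', Nat.add_sub_cancel, Nat.sub_zero]
  rw [add_comm]
  congr 1
  refine sum_congr rfl fun i _ => ?_
  congr 2
  omega

lemma wordValue_mono {y : ℕ → ℕ} (h : ∀ i < m, x i ≤ y i) : wordValue q m x ≤ wordValue q m y :=
  sum_le_sum fun i hi => Nat.mul_le_mul_left _ (h i (mem_range.1 hi))

lemma eq_of_wordValue_eq_of_le {y : ℕ → ℕ} (hq : 0 < q) (hle : ∀ i < m, x i ≤ y i)
    (heq : wordValue q m x = wordValue q m y) {i : ℕ} (hi : i < m) : x i = y i := by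
  have hterm := (sum_eq_sum_iff_of_le fun i hi =>
    Nat.mul_le_mul_left (q ^ (m - 1 - i)) (hle i (mem_range.1 hi))).1 heq i (mem_range.2 hi)
  exact Nat.eq_of_mul_eq_mul_left (Nat.pow_pos hq) hterm

lemma mul_repunit_add_one (k m : ℕ) : k * repunit (k + 1) m + 1 = (k + 1) ^ m := by
  rw [repunit, mul_comm, geom_sum_mul_add]

lemma repunit_pos (hm : 0 < m) : 0 < repunit q m := by
  obtain ⟨m, rfl⟩ := Nat.exists_eq_add_of_lt hm
  simp [repunit, sum_range_succ']

lemma wordValue_const (q m k : ℕ) : wordValue q m (fun _ => k) = k * repunit q m := by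
  rw [wordValue, repunit, ← sum_mul, sum_range_reflect (fun i => q ^ i), mul_comm]

lemma wordValue_eq_sum_add_mul_wordValue_sum (k m : ℕ) (x : ℕ → ℕ) :
    wordValue (k + 1) m x =
      ∑ i ∈ range m, x i + k * wordValue (k + 1) m fun r => ∑ i ∈ range r, x i := by
  induction m with
  | zero => simp [wordValue]
  | succ m ih =>
    rw [wordValue_succ, wordValue_succ, sum_range_succ]
    linear_combination (k + 1) * ih

lemma repunit_eq_add_wordValue (hk : 0 < k) (m : ℕ) :
    repunit (k + 1) m = m + wordValue (k + 1) m fun r => r * k := by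
  have hparts := wordValue_eq_sum_add_mul_wordValue_sum k m fun _ => k
  simp only [wordValue_const, sum_const, card_range, smul_eq_mul] at hparts
  exact Nat.eq_of_mul_eq_mul_left hk (by linarith)

end Words

section PeriodicWords

variable {k m c : ℕ} {x : ℕ → ℕ}

lemma sum_range_shift (hx : Periodic x m) (j : ℕ) :
    ∑ i ∈ range m, x (j + i) = ∑ i ∈ range m, x i := by
  induction j with
  | zero => simp only [zero_add]
  | succ j ih =>
    have hsucc := sum_range_succ (fun i => x (j + i)) m
    rw [sum_range_succ', hx, add_zero] at hsucc
    rw [← ih, ← Nat.add_right_cancel hsucc]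
    exact sum_congr rfl fun i _ => congrArg x (by omega)

lemma exists_shift_sum_range_le (hm : 0 < m) (hx : Periodic x m) :
    ∃ j, ∀ r, m * ∑ i ∈ range r, x (j + i) ≤ r * ∑ i ∈ range m, x i := by
  let excess : ℕ → ℤ := fun j => m * ∑ i ∈ range j, (x i : ℤ) - j * ∑ i ∈ range m, (x i : ℤ)
  have hperiodic : Periodic excess m := fun j => by
    have hshift : ∑ i ∈ range m, (x (j + i) : ℤ) = ∑ i ∈ range m, (x i : ℤ) :=
      mod_cast sum_range_shift hx j
    simp only [excess, sum_range_add, hshift]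
    push_cast
    ring
  obtain ⟨j, -, hmax⟩ := exists_max_image (range m) excess ⟨0, mem_range.2 hm⟩
  refine ⟨j, fun r => ?_⟩
  have hle := hmax ((j + r) % m) (mem_range.2 (Nat.mod_lt _ hm))
  rw [hperiodic.map_mod_nat] at hle
  simp only [excess, sum_range_add] at hle
  zify
  push_cast at hle
  linarith

lemma mul_wordValue_shift (hx : Periodic x m) (j : ℕ) :
    (k + 1) * wordValue (k + 1) m (fun i => x (j + i)) =
      wordValue (k + 1) m (fun i => x (j + 1 + i)) + k * repunit (k + 1) m * x j := by
  have hsucc := wordValue_succ' (k + 1) m fun i => x (j + i)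
  rw [wordValue_succ, hx, ← mul_repunit_add_one, add_zero] at hsucc
  simp only [add_right_comm j 1, add_assoc] at hsucc ⊢
  linarith

lemma wordValue_shift_eq (hx : Periodic x m) (hsum : ∑ i ∈ range m, x i = k * c) (j : ℕ) :
    wordValue (k + 1) m (fun i => x (j + i)) =
      k * (c + wordValue (k + 1) m fun r => ∑ i ∈ range r, x (j + i)) := by
  rw [wordValue_eq_sum_add_mul_wordValue_sum, sum_range_shift hx, hsum, mul_add]

lemma add_wordValue_sum_lt_repunit (hk : 0 < k) (hc : c < m) (hxk : ∀ i, x i ≤ k) :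
    c + wordValue (k + 1) m (fun r => ∑ i ∈ range r, x i) < repunit (k + 1) m := by
  rw [repunit_eq_add_wordValue hk]
  refine add_lt_add_of_lt_of_le hc (wordValue_mono fun r _ => ?_)
  simpa using sum_le_card_nsmul (range r) x k fun i _ => hxk i

lemma mul_pow_mod_repunit_eq_shift (hk : 0 < k) (hx : Periodic x m) (hxk : ∀ i, x i ≤ k)
    (hsum : ∑ i ∈ range m, x i = k * c) (hc : c < m) (j : ℕ) :
    (c + wordValue (k + 1) m fun r => ∑ i ∈ range r, x i) * (k + 1) ^ j % repunit (k + 1) m =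
      c + wordValue (k + 1) m fun r => ∑ i ∈ range r, x (j + i) := by
  let u : ℕ → ℕ := fun j => c + wordValue (k + 1) m fun r => ∑ i ∈ range r, x (j + i)
  have hstep (j : ℕ) : (k + 1) * u j = u (j + 1) + repunit (k + 1) m * x j := by
    have hmul := mul_wordValue_shift (k := k) hx j
    rw [wordValue_shift_eq hx hsum, wordValue_shift_eq hx hsum] at hmul
    exact Nat.eq_of_mul_eq_mul_left hk (by linear_combination hmul)
  have hmod : u 0 * (k + 1) ^ j ≡ u j [MOD repunit (k + 1) m] := by
    induction j with
    | zero => simp [Nat.ModEq.refl]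
    | succ j ih =>
      calc u 0 * (k + 1) ^ (j + 1) = (k + 1) * (u 0 * (k + 1) ^ j) := by ring
        _ ≡ (k + 1) * u j [MOD repunit (k + 1) m] := ih.mul_left _
        _ = u (j + 1) + repunit (k + 1) m * x j := hstep j
        _ ≡ u (j + 1) [MOD repunit (k + 1) m] := by simp [Nat.ModEq]
  simp only [u, zero_add] at hmod
  rw [hmod, Nat.mod_eq_of_lt (add_wordValue_sum_lt_repunit hk hc fun i => hxk (j + i))]

end PeriodicWords

section Expansion

/-- The `j`-th digit, counted from `0`, after the point of the fractional part of `s / n` in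
base `q`. -/
def fracDigit (q n s j : ℕ) : ℕ := q * (s * q ^ j % n) / n

variable {q n s k m : ℕ}

lemma mul_mod_eq_add_mul_fracDigit (q n s j : ℕ) :
    q * (s * q ^ j % n) = s * q ^ (j + 1) % n + n * fracDigit q n s j := by
  have hmod : s * q ^ (j + 1) % n = q * (s * q ^ j % n) % n := by
    rw [Nat.mul_mod_mod, pow_succ', mul_left_comm]
  rw [hmod, fracDigit, Nat.mod_add_div]

lemma pow_mul_mod_eq_add_mul_wordValue (q n s j r : ℕ) :
    q ^ r * (s * q ^ j % n) =
      s * q ^ (j + r) % n + n * wordValue q r fun i => fracDigit q n s (j + i) := by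
  induction r with
  | zero => simp [wordValue]
  | succ r ih =>
    have hstep := mul_mod_eq_add_mul_fracDigit q n s (j + r)
    rw [wordValue_succ, ← add_assoc j]
    linear_combination q * ih + hstep

lemma fracDigit_lt (hq : 0 < q) (hn : 0 < n) (s j : ℕ) : fracDigit q n s j < q :=
  Nat.div_lt_of_lt_mul (by
    rw [mul_comm n]
    exact Nat.mul_lt_mul_of_pos_left (Nat.mod_lt _ hn) hq)

lemma mul_pow_mod_repunit_periodic (k m s : ℕ) :
    Periodic (fun j => s * (k + 1) ^ j % repunit (k + 1) m) m := fun j => by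
  have hone : (k + 1) ^ m ≡ 1 [MOD repunit (k + 1) m] := by
    rw [← mul_repunit_add_one]
    simp [Nat.ModEq]
  simpa only [Nat.ModEq, pow_add, ← mul_assoc, mul_one] using hone.mul_left (s * (k + 1) ^ j)

lemma fracDigit_periodic (k m s : ℕ) :
    Periodic (fracDigit (k + 1) (repunit (k + 1) m) s) m :=
  (mul_pow_mod_repunit_periodic k m s).comp fun t => (k + 1) * t / repunit (k + 1) m

lemma wordValue_fracDigit (hm : 0 < m) (s j : ℕ) :
    wordValue (k + 1) m (fun i => fracDigit (k + 1) (repunit (k + 1) m) s (j + i)) =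
      k * (s * (k + 1) ^ j % repunit (k + 1) m) := by
  have hpow := pow_mul_mod_eq_add_mul_wordValue (k + 1) (repunit (k + 1) m) s j m
  have hperiod : s * (k + 1) ^ (j + m) % repunit (k + 1) m = s * (k + 1) ^ j % repunit (k + 1) m :=
    mul_pow_mod_repunit_periodic k m s j
  rw [hperiod, ← mul_repunit_add_one] at hpow
  exact Nat.eq_of_mul_eq_mul_left (repunit_pos (q := k + 1) hm) (by linarith)

lemma sum_fracDigit_lt (hk : 0 < k) (hm : 0 < m) (s : ℕ) :
    ∑ i ∈ range m, fracDigit (k + 1) (repunit (k + 1) m) s i < k * m := by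
  have hn : 0 < repunit (k + 1) m := repunit_pos hm
  have hle (i : ℕ) : fracDigit (k + 1) (repunit (k + 1) m) s i ≤ k :=
    Nat.lt_succ_iff.1 (fracDigit_lt k.succ_pos hn s i)
  have hlt : wordValue (k + 1) m (fracDigit (k + 1) (repunit (k + 1) m) s) <
      wordValue (k + 1) m fun _ => k := by
    have hvalue := wordValue_fracDigit (k := k) hm s 0
    simp only [zero_add] at hvalue
    rw [hvalue, wordValue_const]
    exact Nat.mul_lt_mul_of_pos_left (Nat.mod_lt _ hn) hk
  obtain ⟨i, hi, hdigit⟩ := exists_lt_of_sum_lt hlt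
  simpa [mul_comm] using
    sum_lt_sum (fun i _ => hle i) ⟨i, hi, Nat.lt_of_mul_lt_mul_left hdigit⟩

lemma exists_sum_fracDigit_eq (hk : 0 < k) (hm : 0 < m) (s : ℕ) :
    ∃ c < m, ∑ i ∈ range m, fracDigit (k + 1) (repunit (k + 1) m) s i = k * c := by
  have hdvd : k ∣ ∑ i ∈ range m, fracDigit (k + 1) (repunit (k + 1) m) s i := by
    have hvalue := wordValue_fracDigit (k := k) hm s 0
    simp only [zero_add] at hvalue
    rw [wordValue_eq_sum_add_mul_wordValue_sum] at hvalue
    exact (Nat.dvd_add_left (dvd_mul_right _ _)).1 (hvalue ▸ dvd_mul_right _ _)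
  obtain ⟨c, hc⟩ := hdvd
  exact ⟨c, Nat.lt_of_mul_lt_mul_left (hc ▸ sum_fracDigit_lt hk hm s), hc⟩

end Expansion

section BalancedWord

/-- `s` is the least element of its `q`-cyclotomic coset `{s * q ^ j % n}` modulo `n`. For `n ≠ 0`
the case `j = 0` forces `s < n`. -/
def IsCosetLeader (q n s : ℕ) : Prop := ∀ j, s ≤ s * q ^ j % n

/-- The balanced (mechanical) word of slope `k * c / m`: for `0 < m`, the word of period `m` whose
first `r` digits add up to `⌊r * k * c / m⌋`. -/
def balancedDigit (k m c i : ℕ) : ℕ := (i + 1) * (k * c) / m - i * (k * c) / m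

/-- For `c < m`, the number whose quotient by `repunit (k + 1) m` has the balanced word of slope
`k * c / m` as its base-`(k + 1)` expansion, written through the partial sums of that word. The
largest coset leader is the case `c = m - 1`. -/
def balancedLeader (k m c : ℕ) : ℕ := c + wordValue (k + 1) m fun r => r * (k * c) / m

variable {k m c : ℕ}

lemma balancedLeader_mono {c' : ℕ} (k m : ℕ) (h : c' ≤ c) :
    balancedLeader k m c' ≤ balancedLeader k m c :=
  add_le_add h (wordValue_mono fun r _ => by gcongr)

lemma exists_mul_pow_mod_le_balancedLeader (hk : 0 < k) (hm : 0 < m) (s : ℕ) :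
    ∃ j, s * (k + 1) ^ j % repunit (k + 1) m ≤ balancedLeader k m (m - 1) := by
  obtain ⟨c, hc, hsum⟩ := exists_sum_fracDigit_eq hk hm s
  have hperiodic := fracDigit_periodic k m s
  obtain ⟨j, hj⟩ := exists_shift_sum_range_le hm hperiodic
  refine ⟨j, le_trans (Nat.le_of_mul_le_mul_left ?_ hk)
    (balancedLeader_mono k m (Nat.le_sub_one_of_lt hc))⟩
  rw [← wordValue_fracDigit hm, wordValue_shift_eq hperiodic hsum]
  refine Nat.mul_le_mul_left k (Nat.add_le_add_left (wordValue_mono fun r _ => ?_) c)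
  rw [Nat.le_div_iff_mul_le hm, mul_comm, ← hsum]
  exact hj r

lemma sum_range_balancedDigit (k m c j r : ℕ) :
    ∑ i ∈ range r, balancedDigit k m c (j + i) =
      (j + r) * (k * c) / m - j * (k * c) / m := by
  have hmono : Monotone fun i => (j + i) * (k * c) / m := fun _ _ h => by
    dsimp only
    gcongr
  simpa only [balancedDigit, add_assoc, add_zero] using sum_range_tsub hmono r

lemma balancedDigit_periodic (k c : ℕ) (hm : 0 < m) :
    Periodic (balancedDigit k m c) m := fun i => by
  have hdiv (j : ℕ) : (j + m) * (k * c) / m = j * (k * c) / m + k * c := by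
    rw [add_mul, Nat.add_mul_div_left _ _ hm]
  rw [balancedDigit, add_right_comm, hdiv, hdiv, Nat.add_sub_add_right, balancedDigit]

lemma balancedDigit_le (hc : c < m) (i : ℕ) : balancedDigit k m c i ≤ k := by
  have hm : 0 < m := by omega
  rw [balancedDigit, Nat.sub_le_iff_le_add']
  calc (i + 1) * (k * c) / m ≤ (i * (k * c) + m * k) / m := by
        gcongr
        nlinarith
    _ = i * (k * c) / m + k := Nat.add_mul_div_left _ _ hm

lemma balancedLeader_mul_pow_mod (hk : 0 < k) (hc : c < m) (j : ℕ) :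
    balancedLeader k m c * (k + 1) ^ j % repunit (k + 1) m =
      c + wordValue (k + 1) m fun r => (j + r) * (k * c) / m - j * (k * c) / m := by
  have hm : 0 < m := by omega
  have hprefix (r : ℕ) : ∑ i ∈ range r, balancedDigit k m c i = r * (k * c) / m := by
    simpa using sum_range_balancedDigit k m c 0 r
  have hsum : ∑ i ∈ range m, balancedDigit k m c i = k * c := by
    rw [hprefix, Nat.mul_div_cancel_left _ hm]
  have horbit := mul_pow_mod_repunit_eq_shift hk (balancedDigit_periodic k c hm)
    (balancedDigit_le hc) hsum hc j
  simpa only [balancedLeader, hprefix, sum_range_balancedDigit] using horbit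

lemma isCosetLeader_balancedLeader (hk : 0 < k) (hc : c < m) :
    IsCosetLeader (k + 1) (repunit (k + 1) m) (balancedLeader k m c) := fun j => by
  rw [balancedLeader_mul_pow_mod hk hc]
  exact Nat.add_le_add_left (wordValue_mono fun r _ => div_le_add_mul_div_sub j r _ m) c

lemma balancedLeader_mul_pow_modEq_iff (hk : 0 < k) (hc : c < m) (l : ℕ) :
    balancedLeader k m c * (k + 1) ^ l ≡ balancedLeader k m c [MOD repunit (k + 1) m] ↔
      m ∣ l * (k * c) := by
  have hm : 0 < m := by omega
  have hself : balancedLeader k m c % repunit (k + 1) m = balancedLeader k m c := by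
    simpa [balancedLeader] using balancedLeader_mul_pow_mod hk hc 0
  rw [Nat.ModEq, hself, balancedLeader_mul_pow_mod hk hc, balancedLeader, add_right_inj]
  constructor
  · intro heq
    obtain ⟨r, hr, hdvd⟩ := exists_lt_dvd_add hm l
    have hfloor := eq_of_wordValue_eq_of_le k.succ_pos
      (fun r _ => div_le_add_mul_div_sub l r (k * c) m) heq.symm hr
    have hmono : l * (k * c) / m ≤ (l + r) * (k * c) / m := by
      gcongr
      exact Nat.le_add_right l r
    refine dvd_left_of_div_add_div_eq (b := r * (k * c)) ?_ ?_
    · rw [← add_mul]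
      exact hdvd.mul_right _
    · rw [← add_mul]
      omega
  · intro hdvd
    congr 1 with r
    rw [add_mul, Nat.add_div_of_dvd_right hdvd, Nat.add_sub_cancel_left]

theorem isGreatest_balancedLeader (hk : 0 < k) (hm : 0 < m) :
    IsGreatest {s | IsCosetLeader (k + 1) (repunit (k + 1) m) s} (balancedLeader k m (m - 1)) := by
  refine ⟨isCosetLeader_balancedLeader hk (Nat.sub_one_lt_of_lt hm), fun s hs => ?_⟩
  obtain ⟨j, hj⟩ := exists_mul_pow_mod_le_balancedLeader hk hm s
  exact (hs j).trans hj

theorem isLeast_balancedLeader_period (hk : 0 < k) (hm : 0 < m) :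
    IsLeast {l | 0 < l ∧ balancedLeader k m (m - 1) * (k + 1) ^ l ≡
      balancedLeader k m (m - 1) [MOD repunit (k + 1) m]} (m / m.gcd k) := by
  have hg : 0 < m.gcd k := Nat.gcd_pos_of_pos_left k hm
  have hcop : m.Coprime (m - 1) := (Nat.coprime_self_sub_right hm).2 (Nat.coprime_one_right m)
  have hiff (l : ℕ) : balancedLeader k m (m - 1) * (k + 1) ^ l ≡
      balancedLeader k m (m - 1) [MOD repunit (k + 1) m] ↔ m / m.gcd k ∣ l := by
    rw [balancedLeader_mul_pow_modEq_iff hk (Nat.sub_one_lt_of_lt hm), ← mul_assoc,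
      hcop.dvd_mul_right, mul_comm, Nat.div_dvd_iff_dvd_mul (Nat.gcd_dvd_left m k) hg,
      Nat.dvd_gcd_mul_iff_dvd_mul]
  simp only [hiff]
  exact ⟨⟨Nat.div_pos (Nat.gcd_le_left k hm) hg, dvd_rfl⟩, fun l hl => Nat.le_of_dvd hl.1 hl.2⟩

end BalancedWord

section ClosedForm

variable {k m : ℕ}

lemma card_filter_mul_div_lt (hk : 0 < k) {r : ℕ} (hr : r < m) :
    #{ℓ ∈ range k | ℓ * m / k < r} + r * (k * (m - 1)) / m = r * k := by
  have hm : 0 < m := by omega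
  rw [← mul_assoc]
  have hle : r * k * (m - 1) / m ≤ r * k :=
    Nat.div_le_of_le_mul (by rw [mul_comm]; gcongr; omega)
  have hfilter : {ℓ ∈ range k | ℓ * m / k < r} = range (r * k - r * k * (m - 1) / m) := by
    ext ℓ
    rw [mem_filter, mem_range, mem_range, Nat.div_lt_iff_lt_mul hk, Nat.lt_sub_iff_add_lt,
      ← mul_lt_iff_add_mul_sub_one_div_lt hm, and_iff_right_iff_imp]
    intro hlt
    exact Nat.lt_of_mul_lt_mul_right (hlt.trans_le
      (by rw [mul_comm]; gcongr) : ℓ * m < k * m)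
  rw [hfilter, card_range, Nat.sub_add_cancel hle]

lemma sum_pow_eq_add_mul_wordValue {ι : Type*} (s : Finset ι) (p : ι → ℕ)
    (hp : ∀ t ∈ s, p t < m) :
    ∑ t ∈ s, (k + 1) ^ (m - 1 - p t) =
      #s + k * wordValue (k + 1) m fun r => #{t ∈ s | p t < r} := by
  have hprefix {r : ℕ} : ∑ i ∈ range r, #{t ∈ s | p t = i} = #{t ∈ s | p t < r} := by
    simpa only [mem_range] using sum_card_fiberwise_eq_card_filter s (range r) p
  have hparts := wordValue_eq_sum_add_mul_wordValue_sum k m fun i => #{t ∈ s | p t = i}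
  simp only [hprefix, filter_true_of_mem hp] at hparts
  rw [← hparts, wordValue, ← sum_fiberwise_of_maps_to (t := range m) (g := p) (by simpa using hp)]
  refine sum_congr rfl fun i _ => ?_
  rw [sum_congr rfl fun t ht => by rw [(mem_filter.1 ht).2], sum_const, smul_eq_mul, mul_comm]

/-- The complementary digits `k - balancedDigit k m (m - 1) i` are the multiplicities of `i` among
the numbers `⌊ℓ * m / k⌋`, `ℓ < k`. -/
lemma mul_balancedLeader_add_sum_pow (hk : 0 < k) (hm : 0 < m) :
    k * balancedLeader k m (m - 1) + ∑ ℓ ∈ range k, (k + 1) ^ (m - 1 - ℓ * m / k) =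
      k * repunit (k + 1) m := by
  have hlt : ∀ ℓ ∈ range k, ℓ * m / k < m := fun ℓ hℓ => by
    rw [Nat.div_lt_iff_lt_mul hk, mul_comm]
    exact Nat.mul_lt_mul_of_pos_left (mem_range.1 hℓ) hm
  have hvalue : (wordValue (k + 1) m fun r => #{ℓ ∈ range k | ℓ * m / k < r}) +
      (wordValue (k + 1) m fun r => r * (k * (m - 1)) / m) =
        wordValue (k + 1) m fun r => r * k := by
    simp only [wordValue, ← sum_add_distrib, ← mul_add]
    refine sum_congr rfl fun r hr => ?_
    rw [card_filter_mul_div_lt hk (mem_range.1 hr)]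
  rw [sum_pow_eq_add_mul_wordValue _ _ hlt, card_range, repunit_eq_add_wordValue hk, ← hvalue,
    balancedLeader]
  obtain ⟨c, rfl⟩ := Nat.exists_eq_add_one_of_ne_zero hm.ne'
  rw [Nat.add_sub_cancel]
  ring

lemma sum_pow_sub_mul_div (q a : ℕ) {A : ℕ} (hA : 0 < A) :
    ∑ ℓ ∈ range (2 * A), q ^ (a * (2 * A) + 1 - ℓ * (a * (2 * A) + 2) / (2 * A)) =
      ∑ ℓ ∈ Icc 1 A, q ^ (a * ℓ) + ∑ ℓ ∈ Icc (A + 1) (2 * A), q ^ (a * ℓ + 1) := by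
  have hdiv (ℓ : ℕ) : ℓ * (a * (2 * A) + 2) / (2 * A) = a * ℓ + ℓ / A := by
    rw [show ℓ * (a * (2 * A) + 2) = 2 * ℓ + 2 * A * (a * ℓ) by ring,
      Nat.add_mul_div_left _ _ (by omega), Nat.mul_div_mul_left _ _ two_pos, add_comm]
  have hlow : ∑ ℓ ∈ Ico A (2 * A), q ^ (a * (2 * A) + 1 - (a * ℓ + ℓ / A)) =
      ∑ ℓ ∈ Icc 1 A, q ^ (a * ℓ) := by
    have hreflect := sum_Ico_reflect (fun ℓ => q ^ (a * ℓ)) A (Nat.le_succ (2 * A))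
    rw [Nat.add_sub_cancel_left, show 2 * A + 1 - A = A + 1 by omega,
      Ico_add_one_right_eq_Icc] at hreflect
    rw [← hreflect]
    refine sum_congr rfl fun ℓ hℓ => ?_
    obtain ⟨hA_le, hlt⟩ := mem_Ico.1 hℓ
    rw [Nat.div_eq_of_lt_le (k := 1) (by omega) (by omega), Nat.mul_sub, Nat.add_sub_add_right]
  have hhigh : ∑ ℓ ∈ Ico 0 A, q ^ (a * (2 * A) + 1 - (a * ℓ + ℓ / A)) =
      ∑ ℓ ∈ Icc (A + 1) (2 * A), q ^ (a * ℓ + 1) := by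
    have hreflect := sum_Ico_reflect (fun ℓ => q ^ (a * ℓ + 1)) 0 (show A ≤ 2 * A + 1 by omega)
    rw [show 2 * A + 1 - A = A + 1 by omega, Nat.sub_zero, Ico_add_one_right_eq_Icc] at hreflect
    rw [← hreflect]
    refine sum_congr rfl fun ℓ hℓ => ?_
    have hlt := (mem_Ico.1 hℓ).2
    have hle : a * ℓ ≤ a * (2 * A) := Nat.mul_le_mul_left a (by omega)
    rw [Nat.div_eq_of_lt hlt, Nat.mul_sub, add_zero, Nat.sub_add_comm hle]
  simp only [hdiv]
  rw [range_eq_Ico, ← sum_Ico_consecutive _ A.zero_le (show A ≤ 2 * A by omega), hlow, hhigh,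
    add_comm]

lemma balancedLeader_eq_div (a : ℕ) {A : ℕ} (hA : 0 < A) :
    balancedLeader (2 * A) (a * (2 * A) + 2) (a * (2 * A) + 1) =
      ((2 * A + 1) ^ (a * (2 * A) + 2) - 1 - (2 * A + 1) ^ (a * (2 * A) + 1)
        - ∑ ℓ ∈ Icc 1 A, (2 * A + 1) ^ (a * ℓ)
        - ∑ ℓ ∈ Icc (A + 1) (2 * A - 1), (2 * A + 1) ^ (a * ℓ + 1)) / (2 * A) := by
  have hk : 0 < 2 * A := by omega
  have hsum := mul_balancedLeader_add_sum_pow (m := a * (2 * A) + 2) hk (by omega)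
  have hpow := mul_repunit_add_one (2 * A) (a * (2 * A) + 2)
  have htop := sum_Icc_succ_top (show A + 1 ≤ 2 * A - 1 + 1 by omega)
    fun ℓ => (2 * A + 1) ^ (a * ℓ + 1)
  rw [Nat.sub_add_cancel hk] at htop
  rw [show a * (2 * A) + 2 - 1 = a * (2 * A) + 1 from rfl, sum_pow_sub_mul_div _ _ hA, htop] at hsum
  exact Nat.eq_div_of_mul_eq_right hk.ne' (by omega)

end ClosedForm

theorem stmt_17_general (q a A m n d : ℕ) (hqodd : Odd q) (hq1 : 1 < q)
    (hm : m = a * (q - 1) + 2) (hA : A = (q - 1) / 2) (hn : n = (q ^ m - 1) / (q - 1))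
    (hd : d = (q ^ m - 1 - q ^ (m - 1) - (∑ ℓ ∈ Finset.Icc 1 A, q ^ (a * ℓ))
        - ∑ ℓ ∈ Finset.Icc (A + 1) (q - 2), q ^ (a * ℓ + 1)) / (q - 1)) :
    (∀ j : ℕ, d ≤ d * q ^ j % n) ∧
    (∀ s : ℕ, d < s → s < n → ¬ (∀ j : ℕ, s ≤ s * q ^ j % n)) ∧
    IsLeast {l : ℕ | 0 < l ∧ d * q ^ l ≡ d [MOD n]} (m / 2) := by
  obtain ⟨k, rfl⟩ : ∃ k, q = k + 1 := ⟨q - 1, by omega⟩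
  have hk : 0 < k := by omega
  have hkA : k = 2 * A := by
    obtain ⟨B, hB⟩ := hqodd
    omega
  have hn' : n = repunit (k + 1) m := by
    rw [hn, ← mul_repunit_add_one]
    simp [hk]
  have hd' : d = balancedLeader k m (m - 1) := by
    rw [hd, hm, hkA]
    exact (balancedLeader_eq_div a (by omega)).symm
  have hgcd : m.gcd k = 2 := by
    rw [hm, hkA]
    simp
  have hgreatest := isGreatest_balancedLeader (m := m) hk (by omega)
  rw [hd', hn', ← hgcd]
  exact ⟨hgreatest.1, fun s hs _ hleader => hs.not_ge (hgreatest.2 hleader),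
    isLeast_balancedLeader_period hk (by omega)⟩

/-- For q > 3 an odd prime power, m = a(q-1)+2 with a ≥ 1, n = (q^m-1)/(q-1),
A = (q-1)/2: the largest q-cyclotomic coset leader modulo n is
δ = (q^m - 1 - q^{m-1} - Σ_{ℓ=1}^{A} q^{aℓ} - Σ_{ℓ=A+1}^{q-2} q^{aℓ+1})/(q-1),
and its q-cyclotomic coset has size m/2. -/
theorem stmt_17 (q a A m n d : ℕ) (hq : ∃ p k : ℕ, p.Prime ∧ 0 < k ∧ q = p ^ k)
    (hqodd : Odd q) (hq3 : 3 < q) (ha : 1 ≤ a) (hm : m = a * (q - 1) + 2)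
    (hA : A = (q - 1) / 2)
    (hn : n = (q ^ m - 1) / (q - 1))
    (hd : d = (q ^ m - 1 - q ^ (m - 1) - (∑ ℓ ∈ Finset.Icc 1 A, q ^ (a * ℓ))
        - ∑ ℓ ∈ Finset.Icc (A + 1) (q - 2), q ^ (a * ℓ + 1)) / (q - 1)) :
    (∀ j : ℕ, d ≤ d * q ^ j % n) ∧
    (∀ s : ℕ, d < s → s < n → ¬ (∀ j : ℕ, s ≤ s * q ^ j % n)) ∧
    IsLeast {l : ℕ | 0 < l ∧ d * q ^ l ≡ d [MOD n]} (m / 2) :=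
  stmt_17_general q a A m n d hqodd (by omega) hm hA hn hd
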